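/- (Riemann's theorem for graphs with loops) Let G be a connected graph of genus g = |E(G)| − |V(G)| + 1, possibly with loops. If D ∈ Div(G) has deg D ≥ 2g − 1, then r#_G(D) = deg D − g. -/

import Mathlib

/-- A finite multigraph: vertices `V`, edges `E`, each edge has an (arbitrarily
ordered) pair of endpoints.  Loops are edges whose two endpoints coincide. -/
structure Multigraph where
  V : Type
  E : Type
  [decV : DecidableEq V]
  [fintV : Fintype V]
  [decE : DecidableEq E]
  [fintE : Fintype E]
  ends : E → V × V

attribute [instance] Multigraph.decV Multigraph.fintV Multigraph.decE Multigraph.fintE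

namespace Multigraph

variable (G : Multigraph)

/-- Two vertices are adjacent if some edge joins them. -/
def Adj (v w : G.V) : Prop := ∃ e : G.E, G.ends e = (v, w) ∨ G.ends e = (w, v)

/-- A multigraph is connected if it is nonempty and any two vertices are joined by a walk. -/
def Connected : Prop := Nonempty G.V ∧ ∀ v w : G.V, Relation.ReflTransGen G.Adj v w

/-- The number of edges joining `v` and `w`. -/
def numEdges (v w : G.V) : ℕ :=
  (Finset.univ.filter fun e : G.E => G.ends e = (v, w) ∨ G.ends e = (w, v)).card

/-- The number of loops based at `v`. -/
def numLoops (v : G.V) : ℕ :=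
  (Finset.univ.filter fun e : G.E => G.ends e = (v, v)).card

/-- The valency of `v` (loops count twice). -/
def valency (v : G.V) : ℕ :=
  ∑ e : G.E, ((if (G.ends e).1 = v then 1 else 0) + (if (G.ends e).2 = v then 1 else 0))

/-- The intersection product on vertices: `(v·w)` is the number of edges joining `v` and
`w` when `v ≠ w`, and `(v·v) = -val(v) + 2 loop(v)`. -/
def inter (v w : G.V) : ℤ :=
  if v = w then -(G.valency v : ℤ) + 2 * (G.numLoops v : ℤ) else (G.numEdges v w : ℤ)

/-- The principal divisor `T_v = Σ_w (v·w) w`. -/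
def T (v : G.V) : G.V → ℤ := fun w => G.inter v w

/-- The group of principal divisors, generated by the `T_v`. -/
def Prin : AddSubgroup (G.V → ℤ) := AddSubgroup.closure (Set.range G.T)

/-- The Jacobian group `Div(G)/Prin(G)`. -/
abbrev Jac := (G.V → ℤ) ⧸ G.Prin

/-- A divisor is effective if all its coefficients are nonnegative. -/
def Effective {α : Type} (D : α → ℤ) : Prop := ∀ v, 0 ≤ D v

/-- The degree of a divisor. -/
def degree {α : Type} [Fintype α] (D : α → ℤ) : ℤ := ∑ v, D v

/-- The Baker–Norine rank of a divisor: `-1` if no effective divisor is linearly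
equivalent to `D`, and otherwise the largest `k ≥ 0` such that for every effective
divisor `E` of degree `k` some effective divisor is linearly equivalent to `D - E`. -/
noncomputable def rank (D : G.V → ℤ) : ℤ :=
  sSup {r : ℤ | r = -1 ∨ (0 ≤ r ∧ ∀ E : G.V → ℤ, Effective E → degree E = r →
      ∃ F : G.V → ℤ, Effective F ∧ D - E - F ∈ G.Prin)}

/-- An edge is a loop if its two endpoints coincide. -/
def IsLoop (e : G.E) : Prop := (G.ends e).1 = (G.ends e).2

/-- The refinement of `G` obtained by inserting `n e` new vertices in the interior of
each edge `e` (subdividing `e` into `n e + 1` edges). -/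
def subdivide (n : G.E → ℕ) : Multigraph where
  V := G.V ⊕ (Σ e : G.E, Fin (n e))
  E := Σ e : G.E, Fin (n e + 1)
  ends := fun x =>
    (if h : (x.2 : ℕ) = 0 then Sum.inl (G.ends x.1).1
        else Sum.inr ⟨x.1, ⟨(x.2 : ℕ) - 1, by have := x.2.isLt; omega⟩⟩,
     if h : (x.2 : ℕ) = n x.1 then Sum.inl (G.ends x.1).2
        else Sum.inr ⟨x.1, ⟨(x.2 : ℕ), by have := x.2.isLt; omega⟩⟩)

/-- The natural map `σ* : Div(G) → Div(G̃)` to a refinement, extending a divisor by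
zero on the new vertices. -/
def subdivMap (n : G.E → ℕ) (D : G.V → ℤ) : (G.subdivide n).V → ℤ := Sum.elim D 0

/-- `Ĝ`: the loopless refinement obtained by inserting one new vertex in the interior of
every loop-edge. -/
def hat : Multigraph := G.subdivide fun e => if (G.ends e).1 = (G.ends e).2 then 1 else 0

/-- The rank `r#_G(D) := r_{Ĝ}(σ* D)`. -/
noncomputable def rankSharp (D : G.V → ℤ) : ℤ :=
  G.hat.rank (G.subdivMap (fun e => if (G.ends e).1 = (G.ends e).2 then 1 else 0) D)

/-- A multigraph is loopless if no edge is a loop. -/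
def Loopless : Prop := ∀ e : G.E, (G.ends e).1 ≠ (G.ends e).2

/-- The genus (first Betti number) `g = |E| - |V| + 1` of a connected graph. -/
def genus : ℤ := (Fintype.card G.E : ℤ) - (Fintype.card G.V : ℤ) + 1

/-- The canonical divisor `K#_G = Σ_v (val(v) - 2) v`. -/
def canonical : G.V → ℤ := fun v => (G.valency v : ℤ) - 2

/-- The loopless graph obtained from `G` by removing all loop-edges. -/
def removeLoops : Multigraph where
  V := G.V
  E := {e : G.E // (G.ends e).1 ≠ (G.ends e).2}
  ends := fun e => G.ends e.1

/-- The virtual graph `G^ω` of a weighted graph `(G, ω)`: attach `ω v` loops at each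
vertex `v`. -/
def virt (w : G.V → ℕ) : Multigraph where
  V := G.V
  E := G.E ⊕ (Σ v : G.V, Fin (w v))
  ends := Sum.elim G.ends fun p => (p.1, p.1)

/-- The rank of a divisor on the weighted graph `(G, ω)`: `r_{(G,ω)}(D) := r#_{G^ω}(D)`. -/
noncomputable def rankW (w : G.V → ℕ) (D : G.V → ℤ) : ℤ := (G.virt w).rankSharp D

/-- The canonical divisor of the weighted graph `(G, ω)`. -/
def canonicalW (w : G.V → ℕ) : G.V → ℤ := fun v => (G.valency v : ℤ) + 2 * (w v : ℤ) - 2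

/-- The genus of the weighted graph `(G, ω)`: `b₁(G) + Σ_v ω(v)`. -/
def genusW (w : G.V → ℕ) : ℤ := G.genus + ∑ v, (w v : ℤ)

/-- The rose `R_g`: one vertex and `g` loop-edges. -/
def rose (g : ℕ) : Multigraph where
  V := Unit
  E := Fin g
  ends := fun _ => ((), ())

/-- The subgraph of `G` determined by a set of vertices and a set of edges with
endpoints among them. -/
def subgraph (Vs : Finset G.V) (Es : Finset G.E)
    (h : ∀ e ∈ Es, (G.ends e).1 ∈ Vs ∧ (G.ends e).2 ∈ Vs) : Multigraph where
  V := {x : G.V // x ∈ Vs}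
  E := {e : G.E // e ∈ Es}
  ends := fun e => (⟨(G.ends e.1).1, (h e.1 e.2).1⟩, ⟨(G.ends e.1).2, (h e.1 e.2).2⟩)

/-- Extension of a divisor on a subgraph by zero: `ι_* : Div(H) → Div(G)`. -/
def iota (Vs : Finset G.V) (D : {x : G.V // x ∈ Vs} → ℤ) : G.V → ℤ :=
  fun x => if h : x ∈ Vs then D ⟨x, h⟩ else 0

end Multigraph

namespace Multigraph

/-- A decomposition `G = H₁ ∨ H₂` of `G` associated to a cut vertex `v`:  `H₁`, `H₂` are
connected subgraphs with `V(H₁) ∩ V(H₂) = {v}`, `E(H₁) ∩ E(H₂) = ∅`, covering `G`. -/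
structure Wedge (G : Multigraph) where
  v : G.V
  V1 : Finset G.V
  V2 : Finset G.V
  hv1 : v ∈ V1
  hv2 : v ∈ V2
  E1 : Finset G.E
  E2 : Finset G.E
  cover_V : V1 ∪ V2 = Finset.univ
  inter_V : V1 ∩ V2 = {v}
  cover_E : E1 ∪ E2 = Finset.univ
  disj_E : E1 ∩ E2 = ∅
  ends1 : ∀ e ∈ E1, (G.ends e).1 ∈ V1 ∧ (G.ends e).2 ∈ V1
  ends2 : ∀ e ∈ E2, (G.ends e).1 ∈ V2 ∧ (G.ends e).2 ∈ V2
  conn1 : (G.subgraph V1 E1 ends1).Connected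
  conn2 : (G.subgraph V2 E2 ends2).Connected

/-- The first subgraph `H₁` of a wedge decomposition. -/
def Wedge.H1 {G : Multigraph} (W : G.Wedge) : Multigraph := G.subgraph W.V1 W.E1 W.ends1

/-- The second subgraph `H₂` of a wedge decomposition. -/
def Wedge.H2 {G : Multigraph} (W : G.Wedge) : Multigraph := G.subgraph W.V2 W.E2 W.ends2

variable (G : Multigraph)

/-- The divisor `div(f)` of an integer-valued function `f` on the vertices
(loops contribute zero). -/
def divOf (f : G.V → ℤ) : G.V → ℤ := fun v =>
  ∑ e : G.E, ((if (G.ends e).1 = v then f v - f (G.ends e).2 else 0)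
            + (if (G.ends e).2 = v then f v - f (G.ends e).1 else 0))

/-- An isomorphism of multigraphs (edges may be matched with either orientation). -/
structure Iso (G H : Multigraph) where
  vEquiv : G.V ≃ H.V
  eEquiv : G.E ≃ H.E
  compat : ∀ e : G.E,
    H.ends (eEquiv e) = (vEquiv (G.ends e).1, vEquiv (G.ends e).2) ∨
    H.ends (eEquiv e) = (vEquiv (G.ends e).2, vEquiv (G.ends e).1)

end Multigraph

/-!
Baker and Norine's argument, run on a loopless refinement `H` of `G`, which is connected of the same
genus. Every divisor of degree at least `g` on a connected graph is equivalent to an effective one: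
in a reduced representative, Dhar's burning process charges every vertex other than the base vertex
`q` to edges of its own, so that the coefficient at `q` is at least `deg D - g`. This gives
`r(D) ≥ deg D - g`. For the converse, orient the edges of `H` along a total order on the vertices.
The divisor `ν = ∑ (indeg v - 1) v` has degree `g - 1` and is not equivalent to any effective
divisor. If `deg D ≥ 2g - 1`, then `D - ν` is equivalent to some effective `E` of degree
`deg D - g + 1`; as `D - E` is equivalent to `ν`, the rank of `D` is less than `deg E`.
-/

namespace Multigraph

section Degree

variable {α : Type}

lemma Effective.add {D E : α → ℤ} (hD : Effective D) (hE : Effective E) : Effective (D + E) :=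
  fun v => add_nonneg (hD v) (hE v)

lemma effective_single [DecidableEq α] (v : α) {n : ℤ} (hn : 0 ≤ n) :
    Effective (Pi.single v n) := fun u => by
  rw [Pi.single_apply]
  split_ifs <;> simp [hn]

variable [Fintype α]

lemma degree_add (D E : α → ℤ) : degree (D + E) = degree D + degree E := by
  simp [degree, Finset.sum_add_distrib]

lemma degree_sub (D E : α → ℤ) : degree (D - E) = degree D - degree E := by
  simp [degree]

lemma degree_single [DecidableEq α] (v : α) (n : ℤ) : degree (Pi.single v n) = n := by
  simp [degree]

lemma Effective.degree_nonneg {D : α → ℤ} (hD : Effective D) : 0 ≤ degree D :=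
  Finset.sum_nonneg fun v _ => hD v

end Degree

variable {G : Multigraph}

section Laplacian

lemma divOf_add (f h : G.V → ℤ) : G.divOf (f + h) = G.divOf f + G.divOf h := by
  funext v
  simp only [divOf, Pi.add_apply, ← Finset.sum_add_distrib]
  refine Finset.sum_congr rfl fun e _ => ?_
  split_ifs <;> ring

variable (G) in
/-- The Laplacian `f ↦ div(f)` of `G` as a group homomorphism. -/
def divHom : (G.V → ℤ) →+ (G.V → ℤ) := AddMonoidHom.mk' G.divOf divOf_add

lemma divHom_apply (f : G.V → ℤ) : G.divHom f = G.divOf f := rfl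

lemma divOf_single (v : G.V) : G.divOf (Pi.single v 1) = -G.T v := by
  funext w
  rw [Pi.neg_apply, T, inter]
  split_ifs with h
  · simp only [valency, numLoops, divOf, Finset.card_filter, Nat.cast_sum, Finset.mul_sum,
      ← Finset.sum_neg_distrib, ← Finset.sum_add_distrib]
    refine Finset.sum_congr rfl fun e _ => ?_
    grind
  · simp only [numEdges, divOf, Finset.card_filter, Nat.cast_sum, ← Finset.sum_neg_distrib]
    refine Finset.sum_congr rfl fun e _ => ?_
    grind

lemma Prin_eq_range_divHom : G.Prin = G.divHom.range := by
  apply le_antisymm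
  · rw [Prin, AddSubgroup.closure_le]
    rintro _ ⟨v, rfl⟩
    exact ⟨-Pi.single v 1, by rw [map_neg, divHom_apply, divOf_single, neg_neg]⟩
  · rintro _ ⟨f, rfl⟩
    have hf : f = ∑ v, f v • Pi.single v 1 := by
      simp [← Pi.single_smul, Finset.univ_sum_single]
    rw [hf, map_sum]
    refine sum_mem fun v _ => ?_
    rw [map_zsmul, divHom_apply, divOf_single]
    exact zsmul_mem (neg_mem (AddSubgroup.subset_closure (Set.mem_range_self v))) _

lemma divOf_mem_Prin (f : G.V → ℤ) : G.divOf f ∈ G.Prin :=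
  Prin_eq_range_divHom ▸ AddMonoidHom.mem_range.2 ⟨f, rfl⟩

lemma sum_divOf_mul (f h : G.V → ℤ) : ∑ v, G.divOf f v * h v =
    ∑ e, (f (G.ends e).1 - f (G.ends e).2) * (h (G.ends e).1 - h (G.ends e).2) := by
  simp only [divOf, Finset.sum_mul]
  rw [Finset.sum_comm]
  refine Finset.sum_congr rfl fun e _ => ?_
  simp only [add_mul, ite_mul, zero_mul, Finset.sum_add_distrib, Finset.sum_ite_eq,
    Finset.mem_univ, if_true]
  ring

lemma sum_divOf_mul_comm (f h : G.V → ℤ) :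
    ∑ v, G.divOf f v * h v = ∑ v, G.divOf h v * f v := by
  rw [sum_divOf_mul, sum_divOf_mul]
  exact Finset.sum_congr rfl fun _ _ => mul_comm _ _

lemma degree_divOf (f : G.V → ℤ) : degree (G.divOf f) = 0 := by
  simpa [degree] using sum_divOf_mul f 1

lemma degree_eq_of_sub_mem_Prin {D E : G.V → ℤ} (h : D - E ∈ G.Prin) : degree D = degree E := by
  obtain ⟨f, hf⟩ : D - E ∈ G.divHom.range := Prin_eq_range_divHom ▸ h
  rw [← sub_eq_zero, ← degree_sub, ← hf, divHom_apply, degree_divOf]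

lemma divOf_nonpos_of_forall_le {f : G.V → ℤ} {v : G.V} (h : ∀ u, f v ≤ f u) :
    G.divOf f v ≤ 0 := by
  refine Finset.sum_nonpos fun e _ => ?_
  have h₁ := h (G.ends e).1
  have h₂ := h (G.ends e).2
  split_ifs <;> linarith

lemma divOf_indicator_nonpos {A : Finset G.V} {v : G.V} (hv : v ∉ A) :
    G.divOf (Set.indicator A 1) v ≤ 0 := divOf_nonpos_of_forall_le fun u => by
  rw [Set.indicator_of_notMem (mt Finset.mem_coe.1 hv)]
  exact Set.indicator_nonneg (fun _ _ => zero_le_one) u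

lemma sum_divOf_indicator_mul (A : Finset G.V) (h : G.V → ℤ) :
    ∑ v, G.divOf (Set.indicator A 1) v * h v = ∑ v ∈ A, G.divOf h v := by
  rw [sum_divOf_mul_comm]
  simp [Set.indicator_apply]

lemma divOf_le_valency_mul_sub {f : G.V → ℤ} (hf : ∀ u, 0 ≤ f u) {v w : G.V} (hvw : G.Adj v w) :
    G.divOf f v ≤ G.valency v * f v - f w := by
  obtain ⟨e₀, he₀⟩ := hvw
  have hterm (e : G.E) :
      (if (G.ends e).1 = v then f v - f (G.ends e).2 else 0) +
        (if (G.ends e).2 = v then f v - f (G.ends e).1 else 0) ≤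
      ((if (G.ends e).1 = v then 1 else 0) + (if (G.ends e).2 = v then 1 else 0)) * f v -
        if e = e₀ then f w else 0 := by
    have h₁ := hf (G.ends e).1
    have h₂ := hf (G.ends e).2
    grind
  calc G.divOf f v ≤ _ := Finset.sum_le_sum fun e _ => hterm e
    _ = G.valency v * f v - f w := by simp [valency, Finset.sum_sub_distrib, Finset.sum_mul]

end Laplacian

section Potential

instance : Std.Symm G.Adj where
  symm _ _ h := h.imp fun _ => Or.symm

variable (G) in
/-- The simple graph underlying `G`, whose distance function is used as the distance on `G`. -/
def toSimpleGraph : SimpleGraph G.V := .fromEdgeSet (Sym2.fromRel (r := G.Adj) inferInstance)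

lemma Connected.exists_adj_dist_lt (hG : G.Connected) {q v : G.V} (hv : v ≠ q) :
    ∃ w, G.Adj v w ∧ G.toSimpleGraph.dist w q < G.toSimpleGraph.dist v q := by
  have hreach : G.toSimpleGraph.Reachable v q := by
    rw [toSimpleGraph, SimpleGraph.reachable_fromEdgeSet_fromRel_eq_reflTransGen]
    exact hG.2 v q
  obtain ⟨p, hp⟩ := hreach.exists_walk_length_eq_dist
  cases p with
  | nil => exact absurd rfl hv
  | cons hadj p =>
    refine ⟨_, (SimpleGraph.fromEdgeSet_adj _).1 hadj |>.1, ?_⟩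
    rw [← hp, SimpleGraph.Walk.length_cons]
    exact Nat.lt_succ_of_le (SimpleGraph.dist_le p)

/-- With `M` larger than all valencies, `M ^ (N - dist v q)` drops so fast away from `q` that the
neighbour of `v` closest to `q` outweighs all other terms of its Laplacian at `v`. -/
lemma Connected.exists_divOf_pos (hG : G.Connected) (q : G.V) :
    ∃ h : G.V → ℤ, h q = 0 ∧ Effective h ∧ ∀ v, v ≠ q → 0 < G.divOf h v := by
  set d : G.V → ℕ := fun v => G.toSimpleGraph.dist v q
  set N := ∑ v, d v
  set M : ℤ := (∑ v, G.valency v : ℕ) + 1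
  set p : G.V → ℤ := fun v => M ^ (N - d v)
  have hM1 : 1 ≤ M := by omega
  have hdN (v : G.V) : d v ≤ N := Finset.single_le_sum_of_canonicallyOrdered (Finset.mem_univ v)
  have hvalM (v : G.V) : G.valency v + 1 ≤ M := by
    have : G.valency v ≤ ∑ u, G.valency u :=
      Finset.single_le_sum_of_canonicallyOrdered (Finset.mem_univ v)
    omega
  have hp1 (v : G.V) : 1 ≤ p v := one_le_pow₀ hM1
  have hdiv : G.divOf ((fun _ => M ^ N) - p) = -G.divOf p := by
    rw [← divHom_apply, map_sub, divHom_apply, divHom_apply]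
    simp [divOf, funext_iff]
  refine ⟨(fun _ => M ^ N) - p, by simp [p, d], fun v => ?_, fun v hv => ?_⟩
  · exact sub_nonneg.2 (pow_le_pow_right₀ hM1 (Nat.sub_le _ _))
  · obtain ⟨w, hvw, (hlt : d w < d v)⟩ := hG.exists_adj_dist_lt hv
    have hpw : M * p v ≤ p w := by
      rw [← pow_succ']
      exact pow_le_pow_right₀ hM1 (by have := hdN v; omega)
    have hle := divOf_le_valency_mul_sub (fun u => zero_le_one.trans (hp1 u)) hvw
    rw [hdiv, Pi.neg_apply]
    nlinarith [hvalM v, hp1 v]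

end Potential

section Reduced

/-- `q`-reduced divisors, for a base vertex `q`: the coefficients away from `q` are nonnegative,
and no nonempty set of vertices avoiding `q` can fire without one of them going into debt.
Firing `A` subtracts `div(1_A)`, whose coefficient at `v ∈ A` is the number of edges that join `v`
to the complement of `A`. -/
structure IsReduced (q : G.V) (D : G.V → ℤ) : Prop where
  nonneg : ∀ v, v ≠ q → 0 ≤ D v
  exists_lt : ∀ A : Finset G.V, A.Nonempty → q ∉ A →
    ∃ v ∈ A, D v < G.divOf (Set.indicator A 1) v

lemma Connected.exists_sub_mem_Prin_nonneg (hG : G.Connected) (q : G.V) (D : G.V → ℤ) :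
    ∃ D', D - D' ∈ G.Prin ∧ ∀ v, v ≠ q → 0 ≤ D' v := by
  obtain ⟨h, -, -, hpos⟩ := hG.exists_divOf_pos q
  set c := ∑ v, |D v|
  refine ⟨D + c • G.divOf h, ?_, fun v hv => ?_⟩
  · rw [sub_add_cancel_left]
    exact neg_mem (zsmul_mem (divOf_mem_Prin h) c)
  · have hDc : |D v| ≤ c :=
      Finset.single_le_sum (f := fun u => |D u|) (fun _ _ => abs_nonneg _) (Finset.mem_univ v)
    have hc : c ≤ c * G.divOf h v := le_mul_of_one_le_right ((abs_nonneg _).trans hDc) (hpos v hv)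
    rw [Pi.add_apply, Pi.smul_apply, smul_eq_mul]
    linarith [neg_abs_le (D v)]

/-- Firing sets that avoid `q` strictly decreases `∑ v, D v * h v`, by Green's formula. -/
lemma Connected.exists_isReduced_of_nonneg (hG : G.Connected) {q : G.V} (D : G.V → ℤ)
    (hD : ∀ v, v ≠ q → 0 ≤ D v) : ∃ D', D - D' ∈ G.Prin ∧ IsReduced q D' := by
  obtain ⟨h, hq, hh, hpos⟩ := hG.exists_divOf_pos q
  induction hn : (∑ v, D v * h v).toNat using Nat.strong_induction_on generalizing D with
  | _ n ih
  by_cases hred : IsReduced q D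
  · exact ⟨D, by simp, hred⟩
  obtain ⟨A, hA, hqA, hfire⟩ : ∃ A : Finset G.V, A.Nonempty ∧ q ∉ A ∧
      ∀ v ∈ A, G.divOf (Set.indicator A 1) v ≤ D v := by
    by_contra! hcon
    exact hred ⟨hD, hcon⟩
  set D₁ := D - G.divOf (Set.indicator A 1) with hD₁
  have hD₁_nonneg (v : G.V) (hv : v ≠ q) : 0 ≤ D₁ v := by
    by_cases hvA : v ∈ A
    · exact sub_nonneg.2 (hfire v hvA)
    · exact sub_nonneg.2 ((divOf_indicator_nonpos hvA).trans (hD v hv))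
  have hdrop : ∑ v, D₁ v * h v < ∑ v, D v * h v := by
    have hgain : 0 < ∑ v ∈ A, G.divOf h v :=
      Finset.sum_pos (fun v hv => hpos v (ne_of_mem_of_not_mem hv hqA)) hA
    simp only [hD₁, Pi.sub_apply, sub_mul, Finset.sum_sub_distrib, sum_divOf_indicator_mul]
    omega
  have hD₁_sum : 0 ≤ ∑ v, D₁ v * h v := Finset.sum_nonneg fun v _ => by
    obtain rfl | hv := eq_or_ne v q
    · simp [hq]
    · exact mul_nonneg (hD₁_nonneg v hv) (hh v)
  obtain ⟨D', hD', hD'red⟩ := ih _ (by omega) D₁ hD₁_nonneg rfl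
  refine ⟨D', ?_, hD'red⟩
  convert add_mem (divOf_mem_Prin (Set.indicator A 1)) hD' using 1
  rw [hD₁]
  abel

lemma Connected.exists_isReduced (hG : G.Connected) (q : G.V) (D : G.V → ℤ) :
    ∃ D', D - D' ∈ G.Prin ∧ IsReduced q D' := by
  obtain ⟨D₁, hD₁, hnonneg⟩ := hG.exists_sub_mem_Prin_nonneg q D
  obtain ⟨D', hD', hred⟩ := hG.exists_isReduced_of_nonneg D₁ hnonneg
  exact ⟨D', by simpa using add_mem hD₁ hD', hred⟩

/-- The set of edges with at least one endpoint in `A`. -/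
def incidentEdges (A : Finset G.V) : Finset G.E :=
  Finset.univ.filter fun e => (G.ends e).1 ∈ A ∨ (G.ends e).2 ∈ A

lemma divOf_indicator_add_card_incidentEdges_erase_le (A : Finset G.V) (v : G.V) :
    G.divOf (Set.indicator A 1) v + (incidentEdges (A.erase v)).card ≤
      (incidentEdges A).card := by
  simp only [incidentEdges, Finset.card_filter, divOf, Nat.cast_sum, ← Finset.sum_add_distrib]
  refine Finset.sum_le_sum fun e _ => ?_
  simp only [Set.indicator_apply, Finset.mem_coe, Finset.mem_erase, Pi.one_apply]
  grind

/-- Dhar's burning algorithm: the fire, started at `q`, consumes the vertices of `A` one at a time,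
and each of them is charged to the edges along which the fire reaches it. -/
lemma IsReduced.sum_add_one_le_card_incidentEdges {q : G.V} {D : G.V → ℤ} (hD : IsReduced q D)
    {A : Finset G.V} (hA : q ∉ A) : ∑ v ∈ A, (D v + 1) ≤ (incidentEdges A).card := by
  induction A using Finset.strongInduction with
  | H A ih =>
    obtain rfl | hne := A.eq_empty_or_nonempty
    · simp
    obtain ⟨v, hv, hlt⟩ := hD.exists_lt A hne hA
    have hrest := ih (A.erase v) (Finset.erase_ssubset hv) (mt Finset.mem_of_mem_erase hA)
    have hedges := divOf_indicator_add_card_incidentEdges_erase_le A v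
    rw [← Finset.add_sum_erase A _ hv]
    omega

lemma IsReduced.degree_sub_genus_le {q : G.V} {D : G.V → ℤ} (hD : IsReduced q D) :
    degree D - G.genus ≤ D q := by
  have hburn := hD.sum_add_one_le_card_incidentEdges (Finset.notMem_erase q Finset.univ)
  have hedges : (incidentEdges (Finset.univ.erase q)).card ≤ Fintype.card G.E :=
    Finset.card_le_univ _
  have hdeg : D q + 1 + ∑ v ∈ Finset.univ.erase q, (D v + 1) =
      degree D + Fintype.card G.V := by
    rw [Finset.add_sum_erase _ (fun v => D v + 1) (Finset.mem_univ q), Finset.sum_add_distrib]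
    simp [degree]
  rw [genus]
  omega

end Reduced

section LinearSystem

variable (G) in
/-- The complete linear system `|D|`: the effective divisors linearly equivalent to `D`. -/
def linearSystem (D : G.V → ℤ) : Set (G.V → ℤ) := {F | Effective F ∧ D - F ∈ G.Prin}

lemma Connected.linearSystem_nonempty (hG : G.Connected) {D : G.V → ℤ}
    (hD : G.genus ≤ degree D) : (G.linearSystem D).Nonempty := by
  obtain ⟨q⟩ := hG.1
  obtain ⟨F, hDF, hF⟩ := hG.exists_isReduced q D
  refine ⟨F, fun v => ?_, hDF⟩
  obtain rfl | hv := eq_or_ne v q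
  · have := hF.degree_sub_genus_le
    have := degree_eq_of_sub_mem_Prin hDF
    omega
  · exact hF.nonneg v hv

lemma Connected.genus_nonneg (hG : G.Connected) : 0 ≤ G.genus := by
  obtain ⟨q⟩ := hG.1
  obtain ⟨F, hF, hP⟩ := hG.linearSystem_nonempty (degree_single q G.genus).ge
  rw [← degree_single q G.genus, degree_eq_of_sub_mem_Prin hP]
  exact hF.degree_nonneg

end LinearSystem

section OrderDivisor

variable {α : Type*} [LinearOrder α]

/-- The endpoint of `e` at which `o` is larger, for a ranking `o` of the vertices; in case of a tie,
as for a loop, the first endpoint. -/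
def head (o : G.V → α) (e : G.E) : G.V :=
  if o (G.ends e).1 < o (G.ends e).2 then (G.ends e).2 else (G.ends e).1

/-- The divisor `∑ (indeg v - 1) v` of the acyclic orientation in which each edge points to the
endpoint at which the ranking `o` is larger. -/
def orderDivisor (o : G.V → α) : G.V → ℤ := fun v =>
  (Finset.univ.filter fun e => head o e = v).card - 1

lemma degree_orderDivisor (o : G.V → α) : degree (orderDivisor o) = G.genus - 1 := by
  have hcard : ∑ v, (Finset.univ.filter fun e => head o e = v).card = Fintype.card G.E :=
    (Finset.card_eq_sum_card_fiberwise fun e _ => Finset.mem_coe.2 (Finset.mem_univ _)).symm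
  simp only [degree, orderDivisor, Finset.sum_sub_distrib, ← Nat.cast_sum, hcard]
  simp [genus]

lemma Loopless.card_head_le_divOf (hG : G.Loopless) {o : G.V → α} (ho : o.Injective)
    {f : G.V → ℤ} {v : G.V} (hmax : ∀ u, f u ≤ f v) (hlt : ∀ u, o u < o v → f u < f v) :
    (Finset.univ.filter fun e => head o e = v).card ≤ G.divOf f v := by
  simp only [Finset.card_filter, Nat.cast_sum, divOf]
  refine Finset.sum_le_sum fun e _ => ?_
  have hne := (ho.ne (hG e)).lt_or_gt
  have hmax₁ := hmax (G.ends e).1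
  have hmax₂ := hmax (G.ends e).2
  have hlt₁ := hlt (G.ends e).1
  have hlt₂ := hlt (G.ends e).2
  grind [head]

/-- If `F` were effective with `orderDivisor o - F = div(f)`, the coefficient of `orderDivisor o` at
the `o`-first vertex at which `f` is maximal would be too small. -/
lemma Loopless.linearSystem_orderDivisor (hG : G.Loopless) [Nonempty G.V] {o : G.V → α}
    (ho : o.Injective) : G.linearSystem (orderDivisor o) = ∅ := by
  refine Set.eq_empty_of_forall_notMem fun F ⟨hF, hP⟩ => ?_
  obtain ⟨f, hf⟩ : orderDivisor o - F ∈ G.divHom.range := Prin_eq_range_divHom ▸ hP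
  obtain ⟨v, hv⟩ := Finite.exists_max fun v => toLex (f v, OrderDual.toDual (o v))
  simp only [Prod.Lex.toLex_le_toLex, OrderDual.toDual_le_toDual] at hv
  have hcard := hG.card_head_le_divOf ho (f := f) (v := v)
    (fun u => (hv u).elim le_of_lt fun h => h.1.le)
    (fun u hu => (hv u).resolve_right fun h => hu.not_ge h.2)
  have hfv := congrFun hf v
  rw [divHom_apply, Pi.sub_apply, orderDivisor] at hfv
  have := hF v
  omega

end OrderDivisor

section Riemann

lemma Connected.exists_linearSystem_sub_eq_empty (hG : G.Connected) (hl : G.Loopless)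
    {D : G.V → ℤ} (hD : 2 * G.genus - 1 ≤ degree D) {r : ℤ} (hr : degree D - G.genus < r) :
    ∃ E, Effective E ∧ degree E = r ∧ G.linearSystem (D - E) = ∅ := by
  have := hG.1
  obtain ⟨q⟩ := hG.1
  set ν := orderDivisor (Fintype.equivFin G.V)
  have hνdeg : degree ν = G.genus - 1 := degree_orderDivisor _
  obtain ⟨E, hE, hP⟩ := hG.linearSystem_nonempty (D := D - ν) (by rw [degree_sub]; omega)
  have hEdeg := degree_eq_of_sub_mem_Prin hP
  rw [degree_sub] at hEdeg
  have hS : Effective (Pi.single q (r - degree E) : G.V → ℤ) := effective_single q (by omega)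
  refine ⟨E + Pi.single q (r - degree E), hE.add hS, by rw [degree_add, degree_single]; ring, ?_⟩
  refine Set.eq_empty_of_forall_notMem fun F ⟨hF, hPF⟩ => ?_
  have hmem : F + Pi.single q (r - degree E) ∈ G.linearSystem ν := by
    refine ⟨hF.add hS, ?_⟩
    convert sub_mem hPF hP using 1
    abel
  rwa [hl.linearSystem_orderDivisor (Fintype.equivFin G.V).injective] at hmem

theorem Connected.rank_eq_degree_sub_genus (hG : G.Connected) (hl : G.Loopless) {D : G.V → ℤ}
    (hD : 2 * G.genus - 1 ≤ degree D) : G.rank D = degree D - G.genus := by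
  have hg := hG.genus_nonneg
  refine IsGreatest.csSup_eq ⟨?_, fun r hr => ?_⟩
  · obtain hneg | hnonneg : degree D - G.genus = -1 ∨ 0 ≤ degree D - G.genus := by omega
    · exact .inl hneg
    · refine .inr ⟨hnonneg, fun E _ hE => hG.linearSystem_nonempty ?_⟩
      rw [degree_sub]
      omega
  · by_contra! hlt
    obtain rfl | ⟨-, hr⟩ := hr
    · omega
    obtain ⟨E, hE, hEdeg, hempty⟩ := hG.exists_linearSystem_sub_eq_empty hl hD hlt
    exact Set.Nonempty.ne_empty (hr E hE hEdeg) hempty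

end Riemann

section Subdivide

open Relation

lemma reflTransGen_adj_symm {v w : G.V} (h : ReflTransGen G.Adj v w) : ReflTransGen G.Adj w v :=
  symm h

variable {n : G.E → ℕ}

lemma reflTransGen_adj_subdivide_fst (e : G.E) {i : ℕ} (hi : i < n e + 1) :
    ReflTransGen (G.subdivide n).Adj (.inl (G.ends e).1)
      ((G.subdivide n).ends ⟨e, ⟨i, hi⟩⟩).1 := by
  induction i with
  | zero => exact .refl
  | succ i ih =>
    have hi' : i < n e + 1 := by omega
    have hnext : ((G.subdivide n).ends ⟨e, ⟨i, hi'⟩⟩).2 =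
        ((G.subdivide n).ends ⟨e, ⟨i + 1, hi⟩⟩).1 := by
      simp [subdivide, show i ≠ n e by omega]
    exact (ih hi').tail ⟨⟨e, ⟨i, hi'⟩⟩, .inl (Prod.ext rfl hnext)⟩

lemma reflTransGen_adj_subdivide_snd (e : G.E) :
    ReflTransGen (G.subdivide n).Adj (.inl (G.ends e).1) (.inl (G.ends e).2) :=
  (reflTransGen_adj_subdivide_fst e (Nat.lt_succ_self (n e))).tail
    ⟨⟨e, Fin.last (n e)⟩, .inl (Prod.ext rfl (by simp [subdivide]))⟩

lemma reflTransGen_adj_subdivide_inl {v w : G.V} (h : ReflTransGen G.Adj v w) :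
    ReflTransGen (G.subdivide n).Adj (.inl v) (.inl w) := by
  refine ReflTransGen.lift' Sum.inl (fun a b ⟨e, he⟩ => ?_) _ _ h
  have hsnd := reflTransGen_adj_subdivide_snd (n := n) e
  obtain he | he := he <;> rw [he] at hsnd
  · exact hsnd
  · exact reflTransGen_adj_symm hsnd

lemma Connected.subdivide (hG : G.Connected) (n : G.E → ℕ) : (G.subdivide n).Connected := by
  obtain ⟨q⟩ := hG.1
  have hq : ∀ x, ReflTransGen (G.subdivide n).Adj (.inl q) x := by
    rintro (v | ⟨e, i⟩)
    · exact reflTransGen_adj_subdivide_inl (hG.2 q v)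
    · exact (reflTransGen_adj_subdivide_inl (hG.2 q (G.ends e).1)).trans
        (reflTransGen_adj_subdivide_fst e (Nat.succ_lt_succ i.isLt))
  exact ⟨⟨.inl q⟩, fun x y => (reflTransGen_adj_symm (hq x)).trans (hq y)⟩

lemma genus_subdivide (n : G.E → ℕ) : (G.subdivide n).genus = G.genus := by
  have hV : Fintype.card (G.subdivide n).V = Fintype.card G.V + ∑ e, n e := by
    simp [subdivide]
  have hE : Fintype.card (G.subdivide n).E = Fintype.card G.E + ∑ e, n e := by
    simp [subdivide, Finset.sum_add_distrib, add_comm]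
  rw [genus, genus, hV, hE]
  push_cast
  ring

lemma degree_subdivMap (n : G.E → ℕ) (D : G.V → ℤ) :
    degree (G.subdivMap n D) = degree D := by
  change ∑ x : G.V ⊕ (Σ e, Fin (n e)), Sum.elim D 0 x = degree D
  simp [degree]

lemma loopless_subdivide (hn : ∀ e, G.IsLoop e → n e ≠ 0) : (G.subdivide n).Loopless := by
  rintro ⟨e, i, hi⟩
  have := hn e
  simp only [subdivide, IsLoop] at *
  split_ifs <;> grind

end Subdivide

end Multigraph

open Multigraph in
theorem riemann_theorem_graph_with_loops_general (G : Multigraph) (hG : G.Connected)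
    {n : G.E → ℕ} (hn : ∀ e, G.IsLoop e → n e ≠ 0) (D : G.V → ℤ)
    (hD : 2 * G.genus - 1 ≤ Multigraph.degree D) :
    (G.subdivide n).rank (G.subdivMap n D) = Multigraph.degree D - G.genus := by
  rw [(hG.subdivide n).rank_eq_degree_sub_genus (loopless_subdivide hn)
    (by rwa [genus_subdivide, degree_subdivMap]), genus_subdivide, degree_subdivMap]

open Multigraph in
/-- Riemann's theorem for graphs with loops.  For a connected graph
`G` of genus `g`, if `deg D ≥ 2g - 1` then `r#_G(D) = deg D - g`. -/
theorem riemann_theorem_graph_with_loops (G : Multigraph) (hG : G.Connected)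
    (D : G.V → ℤ) (hD : 2 * G.genus - 1 ≤ Multigraph.degree D) :
    G.rankSharp D = Multigraph.degree D - G.genus :=
  riemann_theorem_graph_with_loops_general G hG (fun _ he => (if_pos he).trans_ne one_ne_zero) D hD
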